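/- Let p be a prime, q = p^m, and let k, r be integers with k > r ≥ 3 and p not dividing k. Let a_0, a_1, …, a_k ∈ F_{q^r} with a_k ≠ 0. Then the polynomial V_{k,r}(X_1,…,X_r) = −∏_{i=1}^r X_i + Σ_{u=1}^{k} Σ_{i=1}^{r} a_u^{q^{i-1}} X_i^u + T(a_0) is irreducible in F̄_q[X_1,…,X_r], where F̄_q is an algebraic closure of F_q containing F_{q^r}; that is, the variety V_{k,r} is absolutely irreducible. -/

import Mathlib

open MvPolynomial

/-!
The degree-`k` part of `V_{k,r}` is the diagonal form `∑ a_k^{q^{i-1}} X_i^k`, because `∏ X_i` has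
degree `r < k`. A polynomial over a domain is irreducible as soon as its top-degree part is, since
top-degree parts multiply. A diagonal form of degree `k` in at least two variables is squarefree
when `k` is invertible: a repeated factor divides every partial derivative, hence powers of two
different variables. In at least three variables, single out one of them, `Y`: the form becomes
`a Y^k + g` with `g` squarefree, and Eisenstein's criterion applies at any prime factor of `g`.
-/

section TopDegree

variable {σ R : Type*}

lemma homogeneousComponent_add_mul [CommSemiring R] {f g : MvPolynomial σ R} {m n : ℕ}
    (hf : f.totalDegree ≤ m) (hg : g.totalDegree ≤ n) :
    homogeneousComponent (m + n) (f * g) =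
      homogeneousComponent m f * homogeneousComponent n g := by
  classical
  ext d
  by_cases hd : d.degree = m + n
  · rw [coeff_homogeneousComponent, if_pos hd, coeff_mul, coeff_mul]
    refine Finset.sum_congr rfl fun ⟨x, y⟩ hxy ↦ ?_
    have hdeg : x.degree + y.degree = m + n := by
      rw [← map_add, Finset.HasAntidiagonal.mem_antidiagonal.1 hxy, hd]
    simp only [coeff_homogeneousComponent]
    rcases lt_trichotomy x.degree m with hx | hx | hx
    · rw [if_neg hx.ne, zero_mul,
        coeff_eq_zero_of_totalDegree_lt (hg.trans_lt (show n < y.degree by lia)), mul_zero]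
    · rw [if_pos hx, if_pos (by lia)]
    · rw [if_neg hx.ne', zero_mul, coeff_eq_zero_of_totalDegree_lt (hf.trans_lt hx), zero_mul]
  · rw [coeff_homogeneousComponent, if_neg hd,
      ((homogeneousComponent_isHomogeneous m f).mul
        (homogeneousComponent_isHomogeneous n g)).coeff_eq_zero hd]

lemma isUnit_homogeneousComponent_totalDegree_iff [CommRing R] [IsReduced R]
    {f : MvPolynomial σ R} : IsUnit (homogeneousComponent f.totalDegree f) ↔ IsUnit f := by
  nontriviality R
  have eq_self (h : f.totalDegree = 0) : homogeneousComponent f.totalDegree f = f := by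
    rw [h, homogeneousComponent_eq_self ((totalDegree_zero_iff_isHomogeneous σ).1 h)]
  refine ⟨fun h ↦ ?_, fun h ↦ by rwa [eq_self (isUnit_iff_totalDegree_of_isReduced.1 h).2]⟩
  have hdeg := (homogeneousComponent_isHomogeneous f.totalDegree f).totalDegree h.ne_zero
  rwa [eq_self (hdeg.symm.trans (isUnit_iff_totalDegree_of_isReduced.1 h).2)] at h

lemma irreducible_of_irreducible_homogeneousComponent_totalDegree [CommRing R] [IsDomain R]
    {f : MvPolynomial σ R} (hf : Irreducible (homogeneousComponent f.totalDegree f)) :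
    Irreducible f := by
  refine ⟨mt isUnit_homogeneousComponent_totalDegree_iff.2 hf.not_isUnit, ?_⟩
  rintro g h rfl
  have hg : g ≠ 0 := by rintro rfl; simp at hf
  have hh : h ≠ 0 := by rintro rfl; simp at hf
  rw [totalDegree_mul_of_isDomain hg hh, homogeneousComponent_add_mul le_rfl le_rfl] at hf
  exact (hf.isUnit_or_isUnit rfl).imp isUnit_homogeneousComponent_totalDegree_iff.1
    isUnit_homogeneousComponent_totalDegree_iff.1

lemma irreducible_add_of_isHomogeneous_of_totalDegree_lt [CommRing R] [IsDomain R]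
    {f g : MvPolynomial σ R} {n : ℕ} (hf : Irreducible f) (hfn : f.IsHomogeneous n)
    (hgn : g.totalDegree < n) : Irreducible (f + g) := by
  have hdeg : f.totalDegree = n := hfn.totalDegree hf.ne_zero
  apply irreducible_of_irreducible_homogeneousComponent_totalDegree
  rwa [totalDegree_add_eq_left_of_totalDegree_lt (hdeg ▸ hgn), hdeg, map_add,
    homogeneousComponent_eq_self hfn, homogeneousComponent_eq_zero _ _ hgn, add_zero]

end TopDegree

lemma irreducible_C_mul_X_pow_add_C {R : Type*} [CommRing R] [IsDomain R] {a b p : R} {n : ℕ}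
    (hn : n ≠ 0) (ha : IsUnit a) (hp : Prime p) (hpb : p ∣ b) (hpb2 : ¬ p ^ 2 ∣ b) :
    Irreducible (Polynomial.C a * Polynomial.X ^ n + Polynomial.C b) := by
  set f := Polynomial.C a * Polynomial.X ^ n + Polynomial.C b
  have hcoeff : f.coeff n = a := by simp [f, Polynomial.coeff_C, hn]
  have hnat : f.natDegree = n :=
    Polynomial.natDegree_eq_of_le_of_coeff_ne_zero (by unfold f; compute_degree!)
      (hcoeff ▸ ha.ne_zero)
  have hlead : f.leadingCoeff = a := by rw [Polynomial.leadingCoeff, hnat, hcoeff]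
  have hprime : (Ideal.span {p}).IsPrime := (Ideal.span_singleton_prime hp.ne_zero).2 hp
  refine Polynomial.irreducible_of_eisenstein_criterion hprime ?_ (fun m hm ↦ ?_) ?_ ?_ ?_
  · rw [hlead]
    exact fun h ↦ hprime.ne_top (Ideal.eq_top_of_isUnit_mem _ h ha)
  · have hmn : m ≠ n := (hnat ▸ Polynomial.coe_lt_degree.1 hm).ne
    rw [Ideal.mem_span_singleton]
    rcases eq_or_ne m 0 with rfl | hm0
    · simpa [f, Polynomial.coeff_X_pow, hmn] using hpb
    · simp [f, Polynomial.coeff_X_pow, Polynomial.coeff_C, hmn, hm0]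
  · rw [← Polynomial.natDegree_pos_iff_degree_pos, hnat]
    exact hn.pos
  · simpa [f, Ideal.span_singleton_pow, Ideal.mem_span_singleton, hn.symm] using hpb2
  · exact fun c hc ↦ isUnit_of_dvd_unit (hcoeff ▸ (Polynomial.C_dvd_iff_dvd_coeff c f).1 hc n) ha

lemma dvd_derivation_of_mul_self_dvd {R A : Type*} [CommSemiring R] [CommSemiring A] [Algebra R A]
    (D : Derivation R A A) {x y : A} (h : x * x ∣ y) : x ∣ D y := by
  obtain ⟨z, rfl⟩ := h
  simp only [D.leibniz, smul_eq_mul, mul_assoc, ← mul_add, dvd_mul_right]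

section DiagonalForm

variable {σ : Type*} [Fintype σ]

/-- The diagonal (Fermat-type) form `∑ i, b i * X i ^ n` of degree `n` with coefficients `b`. -/
noncomputable def diagonalForm {R : Type*} [CommSemiring R] (n : ℕ) (b : σ → R) :
    MvPolynomial σ R :=
  ∑ i, C (b i) * X i ^ n

lemma diagonalForm_isHomogeneous {R : Type*} [CommSemiring R] (n : ℕ) (b : σ → R) :
    (diagonalForm n b).IsHomogeneous n :=
  IsHomogeneous.sum _ _ _ fun i _ ↦ isHomogeneous_C_mul_X_pow (b i) i n

lemma pderiv_diagonalForm {R : Type*} [CommSemiring R] (n : ℕ) (b : σ → R) (i : σ) :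
    pderiv i (diagonalForm n b) = C (b i * n) * X i ^ (n - 1) := by
  classical
  simp [diagonalForm, pderiv_X, Pi.single_apply, mul_assoc]

lemma renameEquiv_diagonalForm {R τ : Type*} [CommSemiring R] [Fintype τ] (e : σ ≃ τ) (n : ℕ)
    (b : τ → R) : renameEquiv R e (diagonalForm n (b ∘ e)) = diagonalForm n b := by
  simp [diagonalForm, ← e.sum_comp]

lemma optionEquivLeft_diagonalForm {R : Type*} [CommSemiring R] (n : ℕ) (b : Option σ → R) :
    optionEquivLeft R σ (diagonalForm n b) =
      Polynomial.C (C (b none)) * Polynomial.X ^ n +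
        Polynomial.C (diagonalForm n (b ∘ some)) := by
  simp [diagonalForm, Fintype.sum_option, optionEquivLeft_C]

variable {K : Type*} [Field K] {n : ℕ}

lemma squarefree_diagonalForm [Nontrivial σ] (hn : (n : K) ≠ 0) {b : σ → K} (hb : ∀ i, b i ≠ 0) :
    Squarefree (diagonalForm n b) := by
  intro x hx
  have dvd_X_pow (i : σ) : x ∣ X i ^ (n - 1) := by
    have hunit : IsUnit (C (b i * n) : MvPolynomial σ K) :=
      (IsUnit.mk0 _ (mul_ne_zero (hb i) hn)).map C
    rw [← hunit.dvd_mul_left, ← pderiv_diagonalForm]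
    exact dvd_derivation_of_mul_self_dvd (pderiv i) hx
  obtain ⟨i, j, hij⟩ := exists_pair_ne σ
  have hrel : IsRelPrime (X i : MvPolynomial σ K) (X j) :=
    X_prime.irreducible.isRelPrime_iff_not_dvd.2 (mt X_dvd_X.1 hij)
  exact hrel.pow (dvd_X_pow i) (dvd_X_pow j)

lemma irreducible_diagonalForm_option [Nontrivial σ] (hn : (n : K) ≠ 0) {b : Option σ → K}
    (hb : ∀ i, b i ≠ 0) : Irreducible (diagonalForm n b) := by
  have hn0 : n ≠ 0 := by rintro rfl; simp at hn
  have hsq : Squarefree (diagonalForm n (b ∘ some)) := squarefree_diagonalForm hn fun i ↦ hb _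
  have hnonunit : ¬ IsUnit (diagonalForm n (b ∘ some)) := fun h ↦
    hn0 <| ((diagonalForm_isHomogeneous n (b ∘ some)).totalDegree hsq.ne_zero).symm.trans
      (isUnit_iff_totalDegree_of_isReduced.1 h).2
  obtain ⟨p, hp, hpdvd⟩ := WfDvdMonoid.exists_irreducible_factor hnonunit hsq.ne_zero
  rw [← MulEquiv.irreducible_iff (optionEquivLeft K σ), optionEquivLeft_diagonalForm]
  exact irreducible_C_mul_X_pow_add_C hn0 ((IsUnit.mk0 _ (hb none)).map C) hp.prime hpdvd
    fun h ↦ hp.not_isUnit (hsq p (sq p ▸ h))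

lemma irreducible_diagonalForm (hσ : 3 ≤ Fintype.card σ) (hn : (n : K) ≠ 0) {b : σ → K}
    (hb : ∀ i, b i ≠ 0) : Irreducible (diagonalForm n b) := by
  classical
  obtain ⟨i₀, i, j, hi, hj, hij⟩ := Fintype.two_lt_card_iff.1 hσ
  have : Nontrivial {i // i ≠ i₀} := ⟨⟨i, hi.symm⟩, ⟨j, hj.symm⟩, by simpa using hij⟩
  rw [← renameEquiv_diagonalForm (Equiv.optionSubtypeNe i₀), MulEquiv.irreducible_iff]
  exact irreducible_diagonalForm_option hn fun _ ↦ hb _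

end DiagonalForm

theorem stmt_4_general {σ K : Type*} [Fintype σ] [Field K] {k : ℕ} (hσ : 3 ≤ Fintype.card σ)
    (hσk : Fintype.card σ < k) (hk : (k : K) ≠ 0) (a : ℕ → σ → K) (ha : ∀ i, a k i ≠ 0) (c : K) :
    Irreducible (-(∏ i, X i) + (∑ u ∈ Finset.Icc 1 k, ∑ i, C (a u i) * X i ^ u) + C c) := by
  have hprod : (-∏ i, X i : MvPolynomial σ K).totalDegree < k := by
    rw [totalDegree_neg]
    refine (totalDegree_finsetProd _ _).trans_lt ?_
    simpa using hσk
  have hsum : (∑ u ∈ Finset.Ico 1 k, diagonalForm u (a u)).totalDegree < k := by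
    refine (totalDegree_finsetSum_le (d := k - 1) fun u hu ↦ ?_).trans_lt (by lia)
    have := Finset.mem_Ico.1 hu
    exact (diagonalForm_isHomogeneous u (a u)).totalDegree_le.trans (by lia)
  have hlow : (-(∏ i, X i) + ∑ u ∈ Finset.Ico 1 k, diagonalForm u (a u) + C c).totalDegree < k :=
    (totalDegree_add _ _).trans_lt <| max_lt
      ((totalDegree_add _ _).trans_lt (max_lt hprod hsum)) (by rw [totalDegree_C]; lia)
  convert irreducible_add_of_isHomogeneous_of_totalDegree_lt (irreducible_diagonalForm hσ hk ha)
    (diagonalForm_isHomogeneous k (a k)) hlow using 1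
  rw [← Finset.sum_Ico_add_eq_sum_Icc (by lia)]
  simp only [diagonalForm]
  ring

/-- For `k > r ≥ 3` and `p ∤ k`, the polynomial
`V_{k,r} = -∏ X_i + ∑_{u=1}^k ∑_{i=1}^r a_u^{q^{i-1}} X_i^u + T(a_0)`
with coefficients `a_u ∈ F_{q^r}` and `a_k ≠ 0` is absolutely irreducible, i.e.
irreducible over an algebraic closure of `F_q`. -/
theorem stmt_4 (p m q k r : ℕ) (hp : p.Prime) (hm : 0 < m) (hq : q = p ^ m)
    (hr : 3 ≤ r) (hkr : k > r) (hpk : ¬ p ∣ k)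
    (K : Type) [Field K] [IsAlgClosed K] [CharP K p]
    (a : ℕ → K) (hmem : ∀ u ≤ k, a u ^ q ^ r = a u) (hak : a k ≠ 0) :
    Irreducible
      (-(∏ i : Fin r, X i) +
        (∑ u ∈ Finset.Icc 1 k, ∑ i : Fin r, C (a u ^ q ^ (i : ℕ)) * X i ^ u) +
        C (∑ i ∈ Finset.range r, a 0 ^ q ^ i) : MvPolynomial (Fin r) K) :=
  stmt_4_general (σ := Fin r) (by rwa [Fintype.card_fin]) (by rwa [Fintype.card_fin])
    (mt (CharP.cast_eq_zero_iff K p k).1 hpk) (fun u i ↦ a u ^ q ^ (i : ℕ))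
    (fun _ ↦ pow_ne_zero _ hak) (∑ i ∈ Finset.range r, a 0 ^ q ^ i)
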